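/- Let (S,T) be modular data on Φ. For every unit j ∈ Φ (S_{j0} = S_{00}), the function b ↦ S_{jb}/S_{0b} is a grading of Φ. Conversely, every grading arises this way: if φ : Φ → ℂ∖{0} satisfies φ(c) = φ(a)·φ(b) whenever N_{ab}^c ≠ 0, then there exists a unique unit j ∈ Φ such that φ(b) = S_{jb}/S_{0b} for all b ∈ Φ. -/

import Mathlib

/-!
The matrices `N_a = (N_{ab}^c)_{b,c}` are simultaneously diagonalised by `S`: row `S_d` is a right
eigenvector and its conjugate a left eigenvector of `N_a`, both with eigenvalue `S_{da} / S_{d0}`.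
The positive row `S_0` is the Perron-Frobenius eigenvector.

If `S_{j0} = S_{00}`, the Perron-Frobenius bound reads `|S_{jb}| ≤ S_{0b}`, and it is an equality
because both rows have norm one. The eigenvector equation for `S_j` then exhibits the unit complex
number `φ a * φ b` as a weighted average of the unit complex numbers `φ c` with `N_{ab}^c ≠ 0`,
which forces them all to agree.

Conversely, for a grading `φ` the vector `b ↦ φ b * S_{0b}` is a common eigenvector of the `N_a`.
Pairing it with left eigenvectors shows that it is proportional to some row `S_j`; the same
argument for the positive grading `|φ|` gives the row `S_0`, that is `|φ| = 1`. Comparing the norms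
of `S_j` and `S_0` yields `S_{j0} = S_{00}`.
-/

open scoped BigOperators
open Complex

/-- Modular data on a finite set `Φ` with distinguished element `zero`: a unitary symmetric
matrix `S`, a diagonal matrix `T` of finite order, with the `zero`-row of `S` real and
strictly positive, `S² = (ST)³`, and nonnegative-integer fusion coefficients `N a b c` given
by Verlinde's formula. -/
structure ModularData (Φ : Type) [Fintype Φ] [DecidableEq Φ] where
  zero : Φ
  S : Matrix Φ Φ ℂ
  T : Matrix Φ Φ ℂ
  N : Φ → Φ → Φ → ℕ
  S_unitary : S * S.conjTranspose = 1
  S_symm : ∀ a b, S a b = S b a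
  T_diag : ∀ a b, a ≠ b → T a b = 0
  T_order : ∃ m : ℕ, 0 < m ∧ T ^ m = 1
  S_zero_pos : ∀ a, (S zero a).im = 0 ∧ 0 < (S zero a).re
  modular_rel : S ^ 2 = (S * T) ^ 3
  verlinde : ∀ a b c,
    (N a b c : ℂ) = ∑ d, S a d * S b d * (starRingEnd ℂ) (S c d) / S zero d

/-- A grading of modular data: a nowhere-zero function `φ : Φ → ℂ` with
`φ c = φ a · φ b` whenever `N a b c ≠ 0`. -/
def IsGrading {Φ : Type} [Fintype Φ] [DecidableEq Φ] (M : ModularData Φ) (φ : Φ → ℂ) : Prop :=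
  (∀ b, φ b ≠ 0) ∧ ∀ a b c, M.N a b c ≠ 0 → φ c = φ a * φ b

open Matrix
open scoped ComplexOrder

section Eigenvectors

variable {n : Type*} [Fintype n]

lemma eq_of_mulVec_eq_smul_of_vecMul_eq_smul {R : Type*} [CommRing R] [IsDomain R]
    {A : Matrix n n R} {x y : n → R} {μ ν : R} (hx : A *ᵥ x = μ • x) (hy : y ᵥ* A = ν • y)
    (hyx : y ⬝ᵥ x ≠ 0) : μ = ν := by
  have h : y ⬝ᵥ A *ᵥ x = y ᵥ* A ⬝ᵥ x := dotProduct_mulVec y A x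
  rw [hx, hy, dotProduct_smul, smul_dotProduct] at h
  exact mul_right_cancel₀ hyx h

-- Pair the entrywise triangle inequality `‖μ‖ ‖x‖ ≤ A ‖x‖` with the left eigenvector `w`.
lemma norm_le_of_mulVec_eq_smul_of_pos_vecMul_eq_smul {𝕜 : Type*} [RCLike 𝕜]
    {A : Matrix n n 𝕜} {x w : n → 𝕜} {μ ρ : 𝕜} (hA : ∀ i j, 0 ≤ A i j) (hx : A *ᵥ x = μ • x)
    (hx0 : x ≠ 0) (hw : w ᵥ* A = ρ • w) (hw0 : ∀ i, 0 < w i) : (‖μ‖ : 𝕜) ≤ ρ := by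
  set u : n → 𝕜 := fun i => ‖x i‖
  have hwu : 0 < w ⬝ᵥ u := by
    obtain ⟨i, hi⟩ := Function.ne_iff.mp hx0
    refine Finset.sum_pos' (fun j _ => mul_nonneg (hw0 j).le ?_)
      ⟨i, Finset.mem_univ i, mul_pos (hw0 i) ?_⟩
    · exact RCLike.ofReal_nonneg.mpr (norm_nonneg _)
    · exact RCLike.ofReal_pos.mpr (norm_pos_iff.mpr hi)
  have hAu : (‖μ‖ : 𝕜) • u ≤ A *ᵥ u := fun i =>
    calc (‖μ‖ : 𝕜) * ‖x i‖ = (‖(A *ᵥ x) i‖ : 𝕜) := by simp [hx]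
      _ ≤ ((∑ j, ‖A i j * x j‖ : ℝ) : 𝕜) := RCLike.ofReal_le_ofReal.mpr (norm_sum_le _ _)
      _ = ∑ j, A i j * ‖x j‖ := by simp [RCLike.norm_of_nonneg' (hA i _)]
  refine le_of_mul_le_mul_right ?_ hwu
  calc (‖μ‖ : 𝕜) * (w ⬝ᵥ u) = w ⬝ᵥ (‖μ‖ : 𝕜) • u := by
          rw [dotProduct_smul, smul_eq_mul]
    _ ≤ w ⬝ᵥ A *ᵥ u := dotProduct_le_dotProduct_of_nonneg_left hAu fun i => (hw0 i).le
    _ = ρ * (w ⬝ᵥ u) := by rw [dotProduct_mulVec, hw, smul_dotProduct, smul_eq_mul]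

end Eigenvectors

lemma eq_of_sum_smul_eq_of_norm_le {ι E : Type*} [Fintype ι] [NormedAddCommGroup E]
    [InnerProductSpace ℝ E] {p : ι → ℝ} {x : ι → E} {q : E} (hp : ∀ i, 0 ≤ p i)
    (hsum : ∑ i, p i • x i = (∑ i, p i) • q) (hx : ∀ i, ‖x i‖ ≤ ‖q‖) {i : ι} (hi : p i ≠ 0) :
    x i = q := by
  have hdist (i : ι) : ‖x i - q‖ ^ 2 ≤ 2 * inner ℝ (q - x i) q := by
    rw [norm_sub_sq_real, inner_sub_left, real_inner_self_eq_norm_sq]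
    linarith [pow_le_pow_left₀ (norm_nonneg _) (hx i) 2]
  have hle : ∑ i, p i * ‖x i - q‖ ^ 2 ≤ 0 :=
    calc ∑ i, p i * ‖x i - q‖ ^ 2 ≤ ∑ i, p i * (2 * inner ℝ (q - x i) q) :=
          Finset.sum_le_sum fun i _ => mul_le_mul_of_nonneg_left (hdist i) (hp i)
      _ = 2 * inner ℝ (∑ i, p i • (q - x i)) q := by
          simp only [sum_inner, real_inner_smul_left, Finset.mul_sum, mul_left_comm]
      _ = 0 := by simp [smul_sub, Finset.sum_sub_distrib, ← Finset.sum_smul, hsum]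
  have hnonneg (i : ι) : 0 ≤ p i * ‖x i - q‖ ^ 2 := mul_nonneg (hp i) (sq_nonneg _)
  have hzero := (Fintype.sum_eq_zero_iff_of_nonneg hnonneg).mp
    (hle.antisymm (Finset.sum_nonneg fun i _ => hnonneg i))
  simpa [hi, sub_eq_zero] using congrFun hzero i

section UnitaryGroup

variable {Φ : Type*} [Fintype Φ] [DecidableEq Φ]

lemma row_injective_of_mem_unitaryGroup {R : Type*} [CommRing R] [StarRing R] [Nontrivial R]
    {S : Matrix Φ Φ R} (hS : S ∈ unitaryGroup Φ R) : Function.Injective S.row :=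
  (linearIndependent_rows_of_isUnit (Unitary.toUnits ⟨S, hS⟩).isUnit).injective

lemma exists_star_row_dotProduct_ne_zero {R : Type*} [CommRing R] [StarRing R]
    {S : Matrix Φ Φ R} (hS : S ∈ unitaryGroup Φ R) {x : Φ → R} (hx : x ≠ 0) :
    ∃ d, star (S d) ⬝ᵥ x ≠ 0 := by
  contrapose! hx
  have hzero : Sᵀᴴ *ᵥ x = 0 := funext hx
  have hinv : Sᵀ * Sᵀᴴ = 1 := mem_unitaryGroup_iff.mp (transpose_mem_unitaryGroup_iff.mpr hS)
  rw [← one_mulVec x, ← hinv, ← mulVec_mulVec, hzero, mulVec_zero]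

lemma sum_sq_norm_row_of_mem_unitaryGroup {𝕜 : Type*} [RCLike 𝕜] {S : Matrix Φ Φ 𝕜}
    (hS : S ∈ unitaryGroup Φ 𝕜) (d : Φ) : ∑ b, ‖S d b‖ ^ 2 = 1 := by
  have h : ∑ b, S d b * star (S d b) = 1 := by
    simpa [mul_apply] using congrFun₂ (mem_unitaryGroup_iff.mp hS) d d
  simp only [RCLike.star_def, RCLike.mul_conj] at h
  exact_mod_cast h

end UnitaryGroup

section FusionMatrix

variable {Φ K : Type*} [Fintype Φ] [DecidableEq Φ] [Field K] [StarRing K]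

/-- The matrix `(N_{ab}^c)_{b,c}` of Verlinde fusion coefficients of `a`, with `o` the
distinguished index. The rows of `S` index the characters of the fusion ring and the columns its
basis; for symmetric `S` this is the usual formula. -/
def fusionMatrix (S : Matrix Φ Φ K) (o a : Φ) : Matrix Φ Φ K :=
  Sᵀ * diagonal (fun d => S d a / S d o) * Sᵀᴴ

/-- A nowhere-zero function which is multiplicative along the nonvanishing fusion
coefficients. -/
def IsFusionGrading (S : Matrix Φ Φ K) (o : Φ) (φ : Φ → K) : Prop :=
  (∀ b, φ b ≠ 0) ∧ ∀ a b c, fusionMatrix S o a b c ≠ 0 → φ c = φ a * φ b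

variable {S : Matrix Φ Φ K}

lemma fusionMatrix_apply (S : Matrix Φ Φ K) (o a b c : Φ) :
    fusionMatrix S o a b c = ∑ d, S d a * S d b * star (S d c) / S d o := by
  rw [fusionMatrix, mul_apply]
  refine Finset.sum_congr rfl fun d _ => ?_
  rw [mul_diagonal, transpose_apply, conjTranspose_apply, transpose_apply]
  ring

lemma fusionMatrix_mulVec_row (hS : S ∈ unitaryGroup Φ K) (o a d : Φ) :
    fusionMatrix S o a *ᵥ S d = (S d a / S d o) • S d := by
  have hmul : fusionMatrix S o a * Sᵀ = Sᵀ * diagonal (fun d => S d a / S d o) := by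
    have hinv : Sᵀᴴ * Sᵀ = 1 :=
      mem_unitaryGroup_iff'.mp (transpose_mem_unitaryGroup_iff.mpr hS)
    rw [fusionMatrix, mul_assoc, hinv, mul_one]
  ext b
  calc (fusionMatrix S o a *ᵥ S d) b = (fusionMatrix S o a * Sᵀ) b d := rfl
    _ = S d a / S d o * S d b := by rw [hmul, mul_diagonal, transpose_apply, mul_comm]

lemma star_row_vecMul_fusionMatrix (hS : S ∈ unitaryGroup Φ K) (o a d : Φ) :
    star (S d) ᵥ* fusionMatrix S o a = (S d a / S d o) • star (S d) := by
  have hmul : Sᵀᴴ * fusionMatrix S o a = diagonal (fun d => S d a / S d o) * Sᵀᴴ := by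
    have hinv : Sᵀᴴ * Sᵀ = 1 :=
      mem_unitaryGroup_iff'.mp (transpose_mem_unitaryGroup_iff.mpr hS)
    rw [fusionMatrix, ← mul_assoc, ← mul_assoc, hinv, one_mul]
  ext c
  calc (star (S d) ᵥ* fusionMatrix S o a) c = (Sᵀᴴ * fusionMatrix S o a) d c := rfl
    _ = S d a / S d o * star (S d c) := by
        rw [hmul, diagonal_mul, conjTranspose_apply, transpose_apply]

namespace IsFusionGrading

variable {o : Φ} {φ : Φ → K}

lemma fusionMatrix_mulVec (hφ : IsFusionGrading S o φ) (hS : S ∈ unitaryGroup Φ K) (a : Φ) :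
    fusionMatrix S o a *ᵥ (φ * S o) = (φ a * (S o a / S o o)) • (φ * S o) := by
  ext b
  have hterm (c : Φ) :
      fusionMatrix S o a b c * (φ c * S o c) = φ a * φ b * (fusionMatrix S o a b c * S o c) := by
    by_cases hN : fusionMatrix S o a b c = 0
    · simp [hN]
    · rw [hφ.2 a b c hN]; ring
  calc ∑ c, fusionMatrix S o a b c * (φ c * S o c)
      = φ a * φ b * (fusionMatrix S o a *ᵥ S o) b := by
        simp only [hterm, ← Finset.mul_sum, mulVec, dotProduct]
    _ = φ a * (S o a / S o o) * (φ b * S o b) := by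
        rw [fusionMatrix_mulVec_row hS, Pi.smul_apply, smul_eq_mul]; ring

lemma eq_row_div_of_dotProduct_ne_zero (hφ : IsFusionGrading S o φ) (hS : S ∈ unitaryGroup Φ K)
    {d : Φ} (hd : star (S d) ⬝ᵥ (φ * S o) ≠ 0) (a : Φ) :
    φ a * (S o a / S o o) = S d a / S d o :=
  eq_of_mulVec_eq_smul_of_vecMul_eq_smul (hφ.fusionMatrix_mulVec hS a)
    (star_row_vecMul_fusionMatrix hS o a d) hd

end IsFusionGrading

end FusionMatrix

section IsVerlindeMatrix

variable {Φ 𝕜 : Type*} [Fintype Φ] [DecidableEq Φ] [RCLike 𝕜]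

lemma IsFusionGrading.norm {S : Matrix Φ Φ 𝕜} {o : Φ} {φ : Φ → 𝕜}
    (hφ : IsFusionGrading S o φ) : IsFusionGrading S o fun b => (‖φ b‖ : 𝕜) :=
  ⟨fun b => by simpa using hφ.1 b, fun a b c hN => by simp [hφ.2 a b c hN]⟩

/-- The `S`-part of modular data with distinguished index `o`, in the orientation of
`fusionMatrix`, generalized to possibly non-symmetric `S` and real nonnegative fusion coefficients.
The order on `𝕜` is the one for which `0 ≤ z` means that `z` is real and
nonnegative. -/
structure IsVerlindeMatrix (S : Matrix Φ Φ 𝕜) (o : Φ) : Prop where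
  mem_unitaryGroup : S ∈ unitaryGroup Φ 𝕜
  row_pos (b : Φ) : 0 < S o b
  col_pos (d : Φ) : 0 < S d o
  fusionMatrix_nonneg (a b c : Φ) : 0 ≤ fusionMatrix S o a b c

namespace IsVerlindeMatrix

variable {S : Matrix Φ Φ 𝕜} {o : Φ} (h : IsVerlindeMatrix S o)
include h

lemma star_row : star (S o) = S o :=
  funext fun b => (IsSelfAdjoint.of_nonneg (h.row_pos b).le).star_eq

lemma norm_row_mul_le (d a : Φ) : ‖S d a‖ * ‖S o o‖ ≤ ‖S o a‖ * ‖S d o‖ := by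
  have hS := h.mem_unitaryGroup
  have hrow : S d ≠ 0 := fun h0 => (h.col_pos d).ne' (congrFun h0 o)
  have hperron := star_row_vecMul_fusionMatrix hS o a o
  rw [h.star_row] at hperron
  have hle : (‖S d a / S d o‖ : 𝕜) ≤ S o a / S o o :=
    norm_le_of_mulVec_eq_smul_of_pos_vecMul_eq_smul (h.fusionMatrix_nonneg a)
      (fusionMatrix_mulVec_row hS o a d) hrow hperron h.row_pos
  rw [← RCLike.norm_of_nonneg' (div_pos (h.row_pos a) (h.row_pos o)).le,
    RCLike.ofReal_le_ofReal, norm_div, norm_div] at hle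
  exact (div_le_div_iff₀ (norm_pos_iff.mpr (h.col_pos d).ne')
    (norm_pos_iff.mpr (h.row_pos o).ne')).mp hle

lemma norm_row_eq {j : Φ} (hj : S j o = S o o) (b : Φ) : ‖S j b‖ = ‖S o b‖ := by
  have hle (b : Φ) : ‖S j b‖ ≤ ‖S o b‖ :=
    le_of_mul_le_mul_right (hj ▸ h.norm_row_mul_le j b) (norm_pos_iff.mpr (h.row_pos o).ne')
  have hsum : ∑ b, ‖S j b‖ ^ 2 = ∑ b, ‖S o b‖ ^ 2 := by
    rw [sum_sq_norm_row_of_mem_unitaryGroup h.mem_unitaryGroup,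
      sum_sq_norm_row_of_mem_unitaryGroup h.mem_unitaryGroup]
  have hsq := (Finset.sum_eq_sum_iff_of_le fun b _ =>
    pow_le_pow_left₀ (norm_nonneg _) (hle b) 2).mp hsum b (Finset.mem_univ b)
  exact (pow_left_inj₀ (norm_nonneg _) (norm_nonneg _) two_ne_zero).mp hsq

lemma isFusionGrading_of_eq {j : Φ} (hj : S j o = S o o) :
    IsFusionGrading S o fun b => S j b / S o b := by
  have hne (b : Φ) : S o b ≠ 0 := (h.row_pos b).ne'
  have hnorm (b : Φ) : ‖S j b / S o b‖ = 1 := by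
    rw [norm_div, h.norm_row_eq hj, div_self (norm_ne_zero_iff.mpr (hne b))]
  refine ⟨fun b => norm_ne_zero_iff.mp (hnorm b ▸ one_ne_zero), fun a b c hN => ?_⟩
  have hweight (c : Φ) : (‖fusionMatrix S o a b c * S o c‖ : 𝕜) = fusionMatrix S o a b c * S o c :=
    RCLike.norm_of_nonneg' (mul_nonneg (h.fusionMatrix_nonneg a b c) (h.row_pos c).le)
  have heigen (d : Φ) : ∑ c, fusionMatrix S o a b c * S d c = S d a / S d o * S d b :=
    congrFun (fusionMatrix_mulVec_row h.mem_unitaryGroup o a d) b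
  refine eq_of_sum_smul_eq_of_norm_le (p := fun c => ‖fusionMatrix S o a b c * S o c‖)
    (x := fun c => S j c / S o c) (fun c => norm_nonneg _) ?_ (fun c => ?_)
    (norm_ne_zero_iff.mpr (mul_ne_zero hN (hne c)))
  · calc ∑ c, ‖fusionMatrix S o a b c * S o c‖ • (S j c / S o c)
        = ∑ c, fusionMatrix S o a b c * S j c := by
          refine Finset.sum_congr rfl fun c _ => ?_
          rw [RCLike.real_smul_eq_coe_mul, hweight, mul_assoc, mul_div_cancel₀ _ (hne c)]
      _ = (∑ c, fusionMatrix S o a b c * S o c) * (S j a / S o a * (S j b / S o b)) := by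
          rw [heigen, heigen, hj]
          field_simp [hne]
      _ = _ := by simp only [RCLike.real_smul_eq_coe_mul, RCLike.ofReal_sum, hweight]
  · rw [hnorm, norm_mul, hnorm, hnorm, one_mul]

-- `‖φ‖ * S o` is a positive common eigenvector of the fusion matrices, so it has the same
-- eigenvalues as the positive left eigenvector `S o`.
lemma norm_eq_one_of_isFusionGrading {φ : Φ → 𝕜} (hφ : IsFusionGrading S o φ) (a : Φ) :
    ‖φ a‖ = 1 := by
  have hpos : 0 < star (S o) ⬝ᵥ ((fun b => (‖φ b‖ : 𝕜)) * S o) := by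
    rw [h.star_row]
    refine Finset.sum_pos (fun b _ => mul_pos (h.row_pos b) (mul_pos ?_ (h.row_pos b)))
      ⟨o, Finset.mem_univ o⟩
    exact RCLike.ofReal_pos.mpr (norm_pos_iff.mpr (hφ.1 b))
  have heq := hφ.norm.eq_row_div_of_dotProduct_ne_zero h.mem_unitaryGroup hpos.ne' a
  exact_mod_cast (mul_eq_right₀ (div_pos (h.row_pos a) (h.row_pos o)).ne').mp heq

lemma exists_row_of_isFusionGrading {φ : Φ → 𝕜} (hφ : IsFusionGrading S o φ) :
    ∃ j, S j o = S o o ∧ ∀ b, φ b = S j b / S o b := by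
  have hS := h.mem_unitaryGroup
  have hne (b : Φ) : S o b ≠ 0 := (h.row_pos b).ne'
  obtain ⟨j, hj⟩ := exists_star_row_dotProduct_ne_zero hS (x := φ * S o)
    fun h0 => mul_ne_zero (hφ.1 o) (hne o) (congrFun h0 o)
  have hrow (b : Φ) : S j b = S j o / S o o * (φ b * S o b) := by
    have := hφ.eq_row_div_of_dotProduct_ne_zero hS hj b
    rw [eq_div_iff (h.col_pos j).ne'] at this
    rw [← this]; ring
  have hnormrow (b : Φ) : ‖S j b‖ = ‖S j o / S o o‖ * ‖S o b‖ := by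
    rw [hrow, norm_mul, norm_mul, h.norm_eq_one_of_isFusionGrading hφ, one_mul]
  have hnorm : ‖S j o / S o o‖ ^ 2 = 1 :=
    calc ‖S j o / S o o‖ ^ 2 = ∑ b, (‖S j o / S o o‖ * ‖S o b‖) ^ 2 := by
          simp only [mul_pow, ← Finset.mul_sum, sum_sq_norm_row_of_mem_unitaryGroup hS, mul_one]
      _ = ∑ b, ‖S j b‖ ^ 2 := by simp only [← hnormrow]
      _ = 1 := sum_sq_norm_row_of_mem_unitaryGroup hS j
  have hone : S j o / S o o = 1 := by
    rw [← RCLike.norm_of_nonneg' (div_pos (h.col_pos j) (h.row_pos o)).le,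
      (pow_eq_one_iff_of_nonneg (norm_nonneg _) two_ne_zero).mp hnorm, RCLike.ofReal_one]
  refine ⟨j, (div_eq_one_iff_eq (hne o)).mp hone, fun b => ?_⟩
  rw [eq_div_iff (hne b), hrow, hone, one_mul]

end IsVerlindeMatrix

theorem modularData_gradings_are_units_general {S : Matrix Φ Φ 𝕜} {o : Φ}
    (h : IsVerlindeMatrix S o) :
    (∀ j, S j o = S o o → IsFusionGrading S o fun b => S j b / S o b) ∧
      ∀ φ, IsFusionGrading S o φ → ∃! j, S j o = S o o ∧ ∀ b, φ b = S j b / S o b := by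
  refine ⟨fun j => h.isFusionGrading_of_eq, fun φ hφ => ?_⟩
  obtain ⟨j, hj, hφj⟩ := h.exists_row_of_isFusionGrading hφ
  refine ⟨j, ⟨hj, hφj⟩, fun k ⟨_, hφk⟩ => ?_⟩
  refine row_injective_of_mem_unitaryGroup h.mem_unitaryGroup (funext fun b => ?_)
  exact (div_left_inj' (h.row_pos b).ne').mp ((hφk b).symm.trans (hφj b))

end IsVerlindeMatrix

namespace ModularData

variable {Φ : Type} [Fintype Φ] [DecidableEq Φ] (M : ModularData Φ)

lemma fusionMatrix_S (a b c : Φ) : fusionMatrix M.S M.zero a b c = M.N a b c := by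
  rw [fusionMatrix_apply, M.verlinde]
  refine Finset.sum_congr rfl fun d _ => ?_
  rw [M.S_symm d a, M.S_symm d b, M.S_symm d c, M.S_symm d M.zero, starRingEnd_apply]

lemma isVerlindeMatrix_S : IsVerlindeMatrix M.S M.zero where
  mem_unitaryGroup := mem_unitaryGroup_iff.mpr M.S_unitary
  row_pos b := Complex.pos_iff.mpr ⟨(M.S_zero_pos b).2, (M.S_zero_pos b).1.symm⟩
  col_pos d := M.S_symm d M.zero ▸ Complex.pos_iff.mpr ⟨(M.S_zero_pos d).2, (M.S_zero_pos d).1.symm⟩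
  fusionMatrix_nonneg a b c := M.fusionMatrix_S a b c ▸ Nat.cast_nonneg _

lemma isGrading_iff {φ : Φ → ℂ} : IsGrading M φ ↔ IsFusionGrading M.S M.zero φ := by
  simp only [IsGrading, IsFusionGrading, fusionMatrix_S, Nat.cast_ne_zero]

end ModularData

/-- For every unit `j` (`S_{j0} = S_{00}`) the phase `b ↦ S_{jb}/S_{0b}` is
a grading, and conversely every grading arises from a unique unit in this way. -/
theorem modularData_gradings_are_units
    {Φ : Type} [Fintype Φ] [DecidableEq Φ] (M : ModularData Φ) :
    (∀ j : Φ, M.S j M.zero = M.S M.zero M.zero →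
      IsGrading M (fun b => M.S j b / M.S M.zero b)) ∧
    (∀ φ : Φ → ℂ, IsGrading M φ →
      ∃! j : Φ, M.S j M.zero = M.S M.zero M.zero ∧
        ∀ b, φ b = M.S j b / M.S M.zero b) := by
  simpa only [M.isGrading_iff] using
    modularData_gradings_are_units_general M.isVerlindeMatrix_S
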